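/- Let E ⊆ F be a field extension and let n = n_1 + ⋯ + n_ℓ be a partition of a positive integer n. An F-linear bijection f : F^n → F^n is an isometry for the sum-rank distance d_SR (i.e., d_SR(f(u), f(v)) = d_SR(u, v) for all u, v ∈ F^n) if and only if there exist nonzero scalars a_1, …, a_ℓ ∈ F*, invertible matrices M_i ∈ GL(n_i, E) for i = 1, …, ℓ, and a permutation π of {1, …, ℓ} satisfying n_{π(i)} = n_i for all i, such that f((c^(1) | … | c^(ℓ))) = (a_1 c^(π^{-1}(1)) M_1 | … | a_ℓ c^(π^{-1}(ℓ)) M_ℓ) for every c ∈ F^n. -/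

import Mathlib

/-- The rank weight of a vector over `F` with respect to the extension `F/E`. -/
noncomputable def rankWt (E : Type*) {F : Type*} [Field E] [Field F] [Algebra E F]
    {N : ℕ} (v : Fin N → F) : ℕ :=
  Module.finrank E (Submodule.span E (Set.range v) : Submodule E F)

/-- The sum-rank weight of `c ∈ F^n` with respect to the partition
`n = n 0 + ⋯ + n (ℓ-1)` and the extension `F/E`. -/
noncomputable def srWtP (E : Type*) {F : Type*} [Field E] [Field F] [Algebra E F]
    {ℓ : ℕ} {n : Fin ℓ → ℕ} (c : (i : Fin ℓ) → Fin (n i) → F) : ℕ :=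
  ∑ i, rankWt E (c i)

/-! A vector over `F` has rank weight at most one exactly when it is an `F`-multiple of a vector
over `E`. If `f` preserves sum-rank weight at most one, then for each `x` over `E` supported in
block `i`, at most one block of `f x` is nonzero. A group is not the union of two proper subgroups,
so the target block does not depend on `x`, and by surjectivity `f` permutes the blocks. The
induced maps between blocks preserve rank weight at most one. As in the fundamental theorem of
projective geometry, the images of the coordinate vectors determine such a map up to a diagonal
matrix over `F`, and the image of the all-ones vector forces that diagonal to be an `F`-multiple of
one over `E`. -/

open Matrix

section BlockMaps

variable {ι : Type*} [DecidableEq ι] {V : ι → Type*} [∀ i, AddCommMonoid (V i)]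

theorem map_apply_eq_sum_single [Fintype ι] {W : ι → Type*} [∀ i, AddCommMonoid (W i)] {G : Type*}
    [FunLike G (∀ i, V i) (∀ i, W i)] [AddMonoidHomClass G (∀ i, V i) (∀ i, W i)] (f : G)
    (c : ∀ i, V i) (q : ι) : f c q = ∑ i, f (Pi.single i (c i)) q := by
  conv_lhs => rw [← Finset.univ_sum_single c, map_sum, Finset.sum_apply]

theorem exists_perm_forall_ne_apply_single_eq_zero [Finite ι] {G : Type*}
    [FunLike G (∀ i, V i) (∀ i, V i)] [AddMonoidHomClass G (∀ i, V i) (∀ i, V i)] {f : G}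
    (hsurj : Function.Surjective f)
    (hf : ∀ i, ∃ k, ∀ v q, q ≠ k → f (Pi.single i v) q = 0) :
    ∃ π : Equiv.Perm ι, ∀ i v q, q ≠ π i → f (Pi.single i v) q = 0 := by
  have := Fintype.ofFinite ι
  -- A trivial block has no determined target; sending it to itself makes `σ` surjective.
  have hf' : ∀ i, ∃ k, (Subsingleton (V i) → k = i) ∧ ∀ v q, q ≠ k → f (Pi.single i v) q = 0 := by
    intro i
    rcases subsingleton_or_nontrivial (V i) with hi | hi
    · exact ⟨i, fun _ => rfl, fun v q _ => by simp [Subsingleton.elim v 0]⟩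
    · obtain ⟨k, hk⟩ := hf i
      exact ⟨k, fun h => (not_subsingleton _ h).elim, hk⟩
  choose σ hσ_trivial hσ using hf'
  have σ_surjective : Function.Surjective σ := by
    intro q
    rcases subsingleton_or_nontrivial (V q) with hq | hq
    · exact ⟨q, hσ_trivial q hq⟩
    obtain ⟨w, hw⟩ := exists_ne (0 : V q)
    obtain ⟨c, hc⟩ := hsurj (Pi.single q w)
    by_contra! hσq
    apply hw
    calc w = f c q := by rw [hc, Pi.single_eq_same]
      _ = 0 := by
        rw [map_apply_eq_sum_single]
        exact Finset.sum_eq_zero fun i _ => hσ i _ q (hσq i).symm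
  exact ⟨Equiv.ofBijective σ σ_surjective.bijective_of_finite, hσ⟩

theorem exists_perm_linearEquiv_of_forall_single {R : Type*} [Semiring R] [Finite ι]
    [∀ i, Module R (V i)] (f : (∀ i, V i) ≃ₗ[R] ∀ i, V i)
    (hf : ∀ i, ∃ k, ∀ v q, q ≠ k → f (Pi.single i v) q = 0) :
    ∃ (π : Equiv.Perm ι) (e : ∀ i, V (π.symm i) ≃ₗ[R] V i),
      ∀ c i, f c i = e i (c (π.symm i)) := by
  have := Fintype.ofFinite ι
  obtain ⟨π, hπ⟩ := exists_perm_forall_ne_apply_single_eq_zero f.surjective hf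
  let g (i : ι) : V (π.symm i) →ₗ[R] V i :=
    LinearMap.proj i ∘ₗ f.toLinearMap ∘ₗ LinearMap.single R V (π.symm i)
  have hg (c : ∀ i, V i) (i : ι) : f c i = g i (c (π.symm i)) := by
    rw [map_apply_eq_sum_single]
    refine Finset.sum_eq_single _ (fun k _ hk => hπ k _ i ?_) (by simp)
    rintro rfl
    exact hk (π.symm_apply_apply k).symm
  have g_injective (i : ι) : Function.Injective (g i) := by
    intro v w hvw
    refine Pi.single_injective (π.symm i) (f.injective (funext fun q => ?_))
    obtain rfl | hq := eq_or_ne q i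
    · exact hvw
    · rw [hπ _ v q (by simpa using hq), hπ _ w q (by simpa using hq)]
  have g_surjective (i : ι) : Function.Surjective (g i) := fun w =>
    ⟨f.symm (Pi.single i w) (π.symm i), by simp [← hg]⟩
  exact ⟨π, fun i => LinearEquiv.ofBijective (g i) ⟨g_injective i, g_surjective i⟩, hg⟩

end BlockMaps

section MatrixDescent

theorem vecMul_map_vecMul_map_of_mul_eq_one {R S m n : Type*} [Semiring R] [Semiring S] [Fintype m]
    [Fintype n] [DecidableEq m] (φ : R →+* S) (v : m → S) {M : Matrix m n R} {M' : Matrix n m R}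
    (h : M * M' = 1) : v ᵥ* M.map φ ᵥ* M'.map φ = v := by
  rw [vecMul_vecMul, ← Matrix.map_mul, h, Matrix.map_one _ (map_zero _) (map_one _), vecMul_one]

variable {ι R S : Type*} [Fintype ι] [DecidableEq ι] [CommRing R] [CommRing S]

theorem eq_smul_comp_of_vecMul_map_eq (φ : R →+* S) {l : ι → S} {Y : Matrix ι ι R}
    (hY : IsUnit Y) {a : S} {z : ι → R} (h : l ᵥ* Y.map φ = a • (φ ∘ z)) :
    l = a • (φ ∘ (z ᵥ* Y⁻¹)) := by
  have hYY : Y * Y⁻¹ = 1 := mul_nonsing_inv Y ((isUnit_iff_isUnit_det Y).1 hY)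
  calc l = l ᵥ* Y.map φ ᵥ* Y⁻¹.map φ := (vecMul_map_vecMul_map_of_mul_eq_one φ l hYY).symm
    _ = a • (φ ∘ (z ᵥ* Y⁻¹)) := by
        rw [h, smul_vecMul]
        congr 1
        ext j
        exact (RingHom.map_vecMul φ _ _ j).symm

theorem isUnit_of_isUnit_diagonal_mul_map (φ : R →+* S) [IsLocalHom φ] {l : ι → S}
    {Y : Matrix ι ι R} (h : IsUnit (diagonal l * Y.map φ)) : IsUnit Y := by
  rw [isUnit_iff_isUnit_det, det_mul] at h
  have hdet : IsUnit (φ Y.det) := φ.map_det Y ▸ isUnit_of_mul_isUnit_right h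
  exact (isUnit_iff_isUnit_det Y).2 (isUnit_of_map_unit φ _ hdet)

theorem exists_eq_smul_map_of_rows [Nontrivial S] (φ : R →+* S) [IsLocalHom φ] {A : Matrix ι ι S}
    (hA : IsUnit A) (hrow : ∀ i, ∃ (a : S) (x : ι → R), A.row i = a • (φ ∘ x))
    (hsum : ∃ (a : S) (x : ι → R), (1 : ι → S) ᵥ* A = a • (φ ∘ x)) :
    ∃ (a : S) (M : Matrix ι ι R), a ≠ 0 ∧ IsUnit M ∧ A = a • M.map φ := by
  rcases isEmpty_or_nonempty ι with hι | hι
  · exact ⟨1, 1, one_ne_zero, isUnit_one, Subsingleton.elim _ _⟩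
  choose l Y hlY using hrow
  obtain ⟨a, z, hz⟩ := hsum
  have A_eq : A = diagonal l * (of Y).map φ := by
    ext i j
    simpa using congrFun (hlY i) j
  have hY : IsUnit (of Y) := isUnit_of_isUnit_diagonal_mul_map φ (A_eq ▸ hA)
  have hl : l = a • (φ ∘ (z ᵥ* (of Y)⁻¹)) := by
    refine eq_smul_comp_of_vecMul_map_eq φ hY ?_
    rw [← hz, A_eq, ← vecMul_vecMul]
    congr 1
    ext i
    simp [vecMul_diagonal]
  let t := z ᵥ* (of Y)⁻¹
  have A_eq_smul : A = a • (diagonal t * of Y).map φ := by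
    ext i j
    simp [A_eq, hl, t]
  have ha : a ≠ 0 := by
    rintro rfl
    rw [A_eq_smul, zero_smul] at hA
    exact not_isUnit_zero hA
  refine ⟨a, _, ha, isUnit_of_isUnit_diagonal_mul_map φ (l := fun _ => a) ?_, A_eq_smul⟩
  rwa [← smul_eq_diagonal_mul, ← A_eq_smul]

end MatrixDescent

theorem algebraMap_comp_single_one {E F κ : Type*} [CommSemiring E] [Semiring F] [Algebra E F]
    [DecidableEq κ] (j : κ) : algebraMap E F ∘ Pi.single j 1 = Pi.single j 1 := by
  ext k
  simp [Pi.single_apply, apply_ite (algebraMap E F)]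

theorem eq_zero_of_forall_algebraMap_comp_eq_zero {E F κ W : Type*} [CommSemiring E] [Semiring F]
    [Algebra E F] [Finite κ] [AddCommMonoid W] [Module F W] {g : (κ → F) →ₗ[F] W}
    (hg : ∀ x : κ → E, g (algebraMap E F ∘ x) = 0) : g = 0 := by
  classical
  refine LinearMap.pi_ext' fun j => LinearMap.ext_ring ?_
  simpa [algebraMap_comp_single_one] using hg (Pi.single j 1)

instance finite_span_range {R V κ : Type*} [Semiring R] [AddCommMonoid V] [Module R V] [Finite κ]
    (v : κ → V) : Module.Finite R (Submodule.span R (Set.range v)) :=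
  Module.Finite.span_of_finite R (Set.finite_range v)

section RankWeight

variable {E F : Type*} [Field E] [Field F] [Algebra E F] {m N : ℕ}

theorem rankWt_eq_zero {v : Fin N → F} : rankWt E v = 0 ↔ v = 0 := by
  rw [rankWt, Submodule.finrank_eq_zero, Submodule.span_eq_bot]
  simp [funext_iff]

theorem rankWt_le_one_iff {v : Fin N → F} :
    rankWt E v ≤ 1 ↔ ∃ (a : F) (x : Fin N → E), v = a • (algebraMap E F ∘ x) := by
  calc rankWt E v ≤ 1
      ↔ ∃ a : F, Submodule.span E (Set.range v) ≤ Submodule.span E {a} := by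
        rw [rankWt, ← rank_submodule_le_one_iff', ← Module.finrank_eq_rank, Nat.cast_le_one]
    _ ↔ ∃ a : F, ∀ j, ∃ x : E, x • a = v j := by
        simp only [Submodule.span_le, Set.range_subset_iff, SetLike.mem_coe,
          Submodule.mem_span_singleton]
    _ ↔ ∃ (a : F) (x : Fin N → E), v = a • (algebraMap E F ∘ x) := by
        simp [Classical.skolem, funext_iff, Algebra.smul_def, mul_comm, eq_comm]

theorem rankWt_smul_le (a : F) (v : Fin N → F) : rankWt E (a • v) ≤ rankWt E v := by
  have span_eq : Submodule.span E (Set.range (a • v)) =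
      (Submodule.span E (Set.range v)).map (LinearMap.mulLeft E a) := by
    rw [Submodule.map_span, ← Set.range_comp]
    rfl
  rw [rankWt, span_eq]
  exact Submodule.finrank_map_le _ _

theorem rankWt_smul {a : F} (ha : a ≠ 0) (v : Fin N → F) : rankWt E (a • v) = rankWt E v :=
  (rankWt_smul_le a v).antisymm (by simpa [ha] using rankWt_smul_le (E := E) a⁻¹ (a • v))

theorem rankWt_vecMul_le (v : Fin m → F) (M : Matrix (Fin m) (Fin N) E) :
    rankWt E (v ᵥ* M.map (algebraMap E F)) ≤ rankWt E v := by
  refine Submodule.finrank_mono (Submodule.span_le.2 ?_)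
  rintro _ ⟨j, rfl⟩
  change ∑ k, v k * algebraMap E F (M k j) ∈ Submodule.span E (Set.range v)
  refine Submodule.sum_mem _ fun k _ => ?_
  rw [mul_comm, ← Algebra.smul_def]
  exact Submodule.smul_mem _ _ (Submodule.subset_span ⟨k, rfl⟩)

theorem rankWt_vecMul_of_mul_eq_one (v : Fin m → F) {M : Matrix (Fin m) (Fin N) E}
    {M' : Matrix (Fin N) (Fin m) E} (h : M * M' = 1) :
    rankWt E (v ᵥ* M.map (algebraMap E F)) = rankWt E v := by
  refine (rankWt_vecMul_le v M).antisymm ?_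
  calc rankWt E v
      = rankWt E (v ᵥ* M.map (algebraMap E F) ᵥ* M'.map (algebraMap E F)) := by
        rw [vecMul_map_vecMul_map_of_mul_eq_one _ v h]
    _ ≤ rankWt E (v ᵥ* M.map (algebraMap E F)) := rankWt_vecMul_le _ M'

theorem rankWt_algebraMap_comp_le_one (x : Fin N → E) : rankWt E (algebraMap E F ∘ x) ≤ 1 :=
  rankWt_le_one_iff.2 ⟨1, x, (one_smul _ _).symm⟩

theorem exists_smul_vecMul_of_rankWt_le_one (e : (Fin m → F) ≃ₗ[F] (Fin N → F))
    (he : ∀ v, rankWt E v ≤ 1 → rankWt E (e v) ≤ 1) :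
    ∃ (a : F) (M : Matrix (Fin m) (Fin N) E), a ≠ 0 ∧
        (∃ M' : Matrix (Fin N) (Fin m) E, M * M' = 1 ∧ M' * M = 1) ∧
        ∀ v, e v = a • (v ᵥ* M.map (algebraMap E F)) := by
  obtain rfl : m = N := by simpa using e.finrank_eq
  let A := LinearMap.toMatrixRight' e.toLinearMap
  have he_A (v : Fin m → F) : e v = v ᵥ* A :=
    (LinearMap.congr_fun (LinearMap.toMatrixRight'.symm_apply_apply e.toLinearMap) v).symm
  have hA : IsUnit A := by
    rw [← vecMul_injective_iff_isUnit]
    exact fun v w h => e.injective (by simpa [he_A] using h)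
  have map_rational (x : Fin m → E) :
      ∃ (a : F) (y : Fin m → E), e (algebraMap E F ∘ x) = a • (algebraMap E F ∘ y) :=
    rankWt_le_one_iff.1 (he _ (rankWt_algebraMap_comp_le_one x))
  obtain ⟨a, M, ha, hM, hAM⟩ := exists_eq_smul_map_of_rows (algebraMap E F) hA
    (fun i => by simpa [algebraMap_comp_single_one, he_A] using map_rational (Pi.single i 1))
    (by simpa [he_A] using map_rational 1)
  exact ⟨a, M, ha, isUnit_iff_exists.1 hM, fun v => by rw [he_A, hAM, vecMul_smul]⟩

end RankWeight

section SumRankWeight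

variable {E F : Type*} [Field E] [Field F] [Algebra E F] {ℓ : ℕ} {n : Fin ℓ → ℕ}

theorem srWtP_eq_zero {c : (i : Fin ℓ) → Fin (n i) → F} : srWtP E c = 0 ↔ c = 0 := by
  simp [srWtP, rankWt_eq_zero, funext_iff]

theorem srWtP_single (i : Fin ℓ) (v : Fin (n i) → F) :
    srWtP E (Pi.single i v : (i : Fin ℓ) → Fin (n i) → F) = rankWt E v := by
  rw [srWtP, Finset.sum_eq_single i]
  · simp
  · intro j _ hj
    rw [Pi.single_eq_of_ne hj, rankWt_eq_zero]
  · simp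

theorem rankWt_apply_le_srWtP (c : (i : Fin ℓ) → Fin (n i) → F) (i : Fin ℓ) :
    rankWt E (c i) ≤ srWtP E c :=
  Finset.single_le_sum (f := fun i => rankWt E (c i)) (fun _ _ => Nat.zero_le _)
    (Finset.mem_univ i)

theorem eq_zero_or_eq_zero_of_srWtP_le_one {c : (i : Fin ℓ) → Fin (n i) → F}
    (h : srWtP E c ≤ 1) {i j : Fin ℓ} (hij : i ≠ j) : c i = 0 ∨ c j = 0 := by
  have hpair : ∑ k ∈ {i, j}, rankWt E (c k) ≤ srWtP E c :=
    Finset.sum_le_sum_of_subset (Finset.subset_univ _)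
  rw [Finset.sum_pair hij] at hpair
  simp only [← rankWt_eq_zero (E := E)]
  lia

theorem exists_forall_ne_apply_single_eq_zero
    {f : ((i : Fin ℓ) → Fin (n i) → F) →ₗ[F] ((i : Fin ℓ) → Fin (n i) → F)}
    (hf : ∀ c, srWtP E c ≤ 1 → srWtP E (f c) ≤ 1) (i : Fin ℓ) :
    ∃ k, ∀ v q, q ≠ k → f (Pi.single i v) q = 0 := by
  let g (q : Fin ℓ) : (Fin (n i) → F) →ₗ[F] (Fin (n q) → F) :=
    LinearMap.proj q ∘ₗ f ∘ₗ LinearMap.single F (fun i => Fin (n i) → F) i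
  let gE (q : Fin ℓ) : (Fin (n i) → E) →ₗ[E] (Fin (n q) → F) :=
    (g q).restrictScalars E ∘ₗ (Algebra.linearMap E F).compLeft (Fin (n i))
  have g_eq_zero {q : Fin ℓ} (hq : gE q = 0) : g q = 0 :=
    eq_zero_of_forall_algebraMap_comp_eq_zero (LinearMap.congr_fun hq)
  have gE_apply_eq_zero {q k : Fin ℓ} (hqk : q ≠ k) (x : Fin (n i) → E) :
      gE q x = 0 ∨ gE k x = 0 :=
    eq_zero_or_eq_zero_of_srWtP_le_one
      (hf _ ((srWtP_single i _).trans_le (rankWt_algebraMap_comp_le_one x))) hqk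
  have gE_eq_zero {q k : Fin ℓ} (hqk : q ≠ k) : gE q = 0 ∨ gE k = 0 := by
    simp only [← LinearMap.ker_eq_top, ← top_le_iff]
    exact AddSubgroupClass.subset_union.1 fun x _ => gE_apply_eq_zero hqk x
  by_cases hzero : ∀ q, gE q = 0
  · exact ⟨i, fun v q _ => LinearMap.congr_fun (g_eq_zero (hzero q)) v⟩
  · obtain ⟨k, hk⟩ := not_forall.1 hzero
    exact ⟨k, fun v q hqk =>
      LinearMap.congr_fun (g_eq_zero ((gE_eq_zero hqk).resolve_right hk)) v⟩

theorem exists_perm_smul_vecMul_of_srWtP_le_one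
    {f : ((i : Fin ℓ) → Fin (n i) → F) →ₗ[F] ((i : Fin ℓ) → Fin (n i) → F)}
    (hinj : Function.Injective f) (hf : ∀ c, srWtP E c ≤ 1 → srWtP E (f c) ≤ 1) :
    ∃ (a : Fin ℓ → F) (π : Equiv.Perm (Fin ℓ))
      (M : (i : Fin ℓ) → Matrix (Fin (n (π.symm i))) (Fin (n i)) E),
      (∀ i, a i ≠ 0) ∧ (∀ i, n (π i) = n i) ∧
      (∀ i, ∃ M' : Matrix (Fin (n i)) (Fin (n (π.symm i))) E, M i * M' = 1 ∧ M' * M i = 1) ∧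
      ∀ c i, f c i = a i • (c (π.symm i) ᵥ* (M i).map (algebraMap E F)) := by
  obtain ⟨π, e, hfe⟩ := exists_perm_linearEquiv_of_forall_single
    (LinearEquiv.ofInjectiveEndo f hinj) (exists_forall_ne_apply_single_eq_zero hf)
  have he (i : Fin ℓ) (v : Fin (n (π.symm i)) → F) (hv : rankWt E v ≤ 1) :
      rankWt E (e i v) ≤ 1 := by
    calc rankWt E (e i v) = rankWt E (f (Pi.single (π.symm i) v) i) := by
          rw [show f _ i = _ from hfe _ i, Pi.single_eq_same]
      _ ≤ srWtP E (f (Pi.single (π.symm i) v)) := rankWt_apply_le_srWtP _ i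
      _ ≤ 1 := hf _ ((srWtP_single _ v).trans_le hv)
  choose a M ha hM heM using fun i => exists_smul_vecMul_of_rankWt_le_one (e i) (he i)
  exact ⟨a, π, M, ha, fun i => by simpa using (e (π i)).finrank_eq.symm, hM,
    fun c i => (hfe c i).trans (heM i _)⟩

theorem srWtP_perm_smul_vecMul {a : Fin ℓ → F} (ha : ∀ i, a i ≠ 0) (π : Equiv.Perm (Fin ℓ))
    {M : (i : Fin ℓ) → Matrix (Fin (n (π i))) (Fin (n i)) E}
    (hM : ∀ i, ∃ M' : Matrix (Fin (n i)) (Fin (n (π i))) E, M i * M' = 1)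
    (c : (i : Fin ℓ) → Fin (n i) → F) :
    srWtP E (fun i => a i • (c (π i) ᵥ* (M i).map (algebraMap E F))) = srWtP E c := by
  rw [srWtP, srWtP, ← Equiv.sum_comp π fun i => rankWt E (c i)]
  refine Finset.sum_congr rfl fun i _ => ?_
  obtain ⟨M', hMM'⟩ := hM i
  rw [rankWt_smul (ha i), rankWt_vecMul_of_mul_eq_one _ hMM']

theorem linear_sumRank_isometries_general
    (f : ((i : Fin ℓ) → Fin (n i) → F) →ₗ[F] ((i : Fin ℓ) → Fin (n i) → F)) :
    [∀ u v, srWtP E (f u - f v) = srWtP E (u - v),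
      Function.Injective f ∧ ∀ c, srWtP E c ≤ 1 → srWtP E (f c) ≤ 1,
      ∃ (a : Fin ℓ → F) (π : Equiv.Perm (Fin ℓ))
        (M : (i : Fin ℓ) → Matrix (Fin (n (π.symm i))) (Fin (n i)) E),
        (∀ i, a i ≠ 0) ∧ (∀ i, n (π i) = n i) ∧
        (∀ i, ∃ M' : Matrix (Fin (n i)) (Fin (n (π.symm i))) E, M i * M' = 1 ∧ M' * M i = 1) ∧
        ∀ c i, f c i = a i • (c (π.symm i) ᵥ* (M i).map (algebraMap E F))].TFAE := by
  tfae_have 1 → 2 := by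
    intro h
    have hf (c) : srWtP E (f c) = srWtP E c := by simpa using h c 0
    refine ⟨(injective_iff_map_eq_zero f).2 fun c hc => ?_, fun c hc => (hf c).trans_le hc⟩
    rw [← srWtP_eq_zero (E := E), ← hf, hc, srWtP_eq_zero]
  tfae_have 2 → 3 := fun ⟨hinj, hf⟩ => exists_perm_smul_vecMul_of_srWtP_le_one hinj hf
  tfae_have 3 → 1 := by
    rintro ⟨a, π, M, ha, -, hM, hfM⟩ u v
    rw [← map_sub, funext (hfM (u - v)),
      srWtP_perm_smul_vecMul ha π.symm fun i => (hM i).imp fun _ => And.left]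
  tfae_finish

end SumRankWeight

/-- An `F`-linear bijection of `F^n` (with `n` partitioned as
`n = n 0 + ⋯ + n (ℓ-1)`) is an isometry for the sum-rank distance iff it is of the
form `c ↦ (a₁ c^{(π⁻¹(1))} M₁ | … | a_ℓ c^{(π⁻¹(ℓ))} M_ℓ)` for nonzero scalars
`aᵢ ∈ F*`, invertible matrices `Mᵢ` over `E`, and a permutation `π` of the blocks
with `n (π i) = n i`. -/
theorem linear_sumRank_isometries (E F : Type*) [Field E] [Field F] [Algebra E F]
    (ℓ : ℕ) (hℓ : 0 < ℓ) (n : Fin ℓ → ℕ) (hn : ∀ i, 0 < n i)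
    (f : ((i : Fin ℓ) → Fin (n i) → F) ≃ₗ[F] ((i : Fin ℓ) → Fin (n i) → F)) :
    (∀ u v : (i : Fin ℓ) → Fin (n i) → F,
        srWtP E (f u - f v) = srWtP E (u - v))
    ↔ ∃ (a : Fin ℓ → F) (π : Equiv.Perm (Fin ℓ))
        (M : (i : Fin ℓ) → Matrix (Fin (n (π.symm i))) (Fin (n i)) E),
        (∀ i, a i ≠ 0) ∧ (∀ i, n (π i) = n i) ∧
        (∀ i, ∃ M' : Matrix (Fin (n i)) (Fin (n (π.symm i))) E,
            M i * M' = 1 ∧ M' * M i = 1) ∧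
        (∀ (c : (i : Fin ℓ) → Fin (n i) → F) (i : Fin ℓ) (j : Fin (n i)),
            f c i j = a i * ∑ k, c (π.symm i) k * algebraMap E F (M i k j)) := by
  refine ((linear_sumRank_isometries_general f.toLinearMap).out 0 2).trans ?_
  simp [funext_iff, vecMul, dotProduct]
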